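/- (Duran, via convolution) For every complex sequence (s_n)_{n∈ℕ} there exists a Schwartz function f : ℝ → ℂ with supp f ⊆ [0,∞) such that s_n = ∫ xⁿ · f(x) dx for all n ∈ ℕ. -/

import Mathlib

open MeasureTheory

/-!
By integration by parts, the `n`-th derivative of a bump function supported in `[0, ∞)` has
vanishing moments of order less than `n` and a nonzero moment of order `n`. Replacing a function `g`
by `t ^ (n + 1) • g (t * ·)` with `t > 0` preserves the `n`-th moment and the vanishing of the lower
ones, while the Schwartz seminorm of index `(k, l)` is multiplied by `t ^ (n + 1 - k + l)`, which is
small with `t` as long as `k ≤ n`. One can therefore prescribe the moments one after the other, each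
time adding a correction that does not affect the earlier moments and is so small that the series of
all corrections converges in the Schwartz space.
-/

open Filter Topology
open scoped SchwartzMap ContDiff

section Support

variable {X M : Type*} [TopologicalSpace X] [Zero M]

theorem tsupport_subset_iff_forall_notMem {f : X → M} {K : Set X} (hK : IsClosed K) :
    tsupport f ⊆ K ↔ ∀ x ∉ K, f x = 0 :=
  hK.closure_subset_iff.trans Function.support_subset_iff'

end Support

section Triangular

variable {A B : Type*} [AddCommMonoid A] [AddCommGroup B]

theorem exists_seq_map_sum_range_succ_eq (u : ℕ → A →+ B) (S : ℕ → Set A)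
    (h : ∀ n b, ∃ a ∈ S n, (∀ k < n, u k a = 0) ∧ u n a = b) (s : ℕ → B) :
    ∃ a : ℕ → A, (∀ n, a n ∈ S n) ∧ (∀ n, ∀ k < n, u k (a n) = 0) ∧
      ∀ n, u n (∑ i ∈ Finset.range (n + 1), a i) = s n := by
  choose c c_mem c_lt c_eq using h
  let P : ℕ → A := Nat.rec 0 fun n p => p + c n (s n - u n p)
  let a : ℕ → A := fun n => c n (s n - u n (P n))
  have sum_eq : ∀ n, ∑ i ∈ Finset.range n, a i = P n := fun n =>
    Finset.sum_range_induction a P rfl n fun _ _ => rfl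
  refine ⟨a, fun n => c_mem n _, fun n => c_lt n _, fun n => ?_⟩
  rw [Finset.sum_range_succ, sum_eq, map_add, c_eq, add_sub_cancel]

theorem exists_seq_forall_hasSum_map [TopologicalSpace B] (u : ℕ → A →+ B) (S : ℕ → Set A)
    (h : ∀ n b, ∃ a ∈ S n, (∀ k < n, u k a = 0) ∧ u n a = b) (s : ℕ → B) :
    ∃ a : ℕ → A, (∀ n, a n ∈ S n) ∧ ∀ k, HasSum (fun n => u k (a n)) (s k) := by
  obtain ⟨a, a_mem, a_lt, a_eq⟩ := exists_seq_map_sum_range_succ_eq u S h s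
  refine ⟨a, a_mem, fun k => ?_⟩
  rw [← a_eq k, map_sum]
  exact hasSum_sum_of_ne_finset_zero fun n hn => a_lt n k (by simpa using hn)

end Triangular

section Series

variable {ι E F : Type*} [NormedAddCommGroup E] [NormedSpace ℝ E]
  [NormedAddCommGroup F] [NormedSpace ℝ F] [CompleteSpace F]

theorem norm_pow_mul_iteratedFDeriv_tsum_le {G : ι → 𝓢(E, F)}
    (hG : ∀ k l, Summable fun i => SchwartzMap.seminorm ℝ k l (G i)) (k l : ℕ) (x : E) :
    ‖x‖ ^ k * ‖iteratedFDeriv ℝ l (fun y => ∑' i, G i y) x‖ ≤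
      ∑' i, SchwartzMap.seminorm ℝ k l (G i) := by
  have norm_le : ∀ (l : ℕ) i x, (l : ℕ∞) ≤ ⊤ →
      ‖iteratedFDeriv ℝ l (G i) x‖ ≤ SchwartzMap.seminorm ℝ 0 l (G i) :=
    fun l i x _ => (G i).norm_iteratedFDeriv_le_seminorm ℝ l x
  have summable_norm : Summable fun i => ‖iteratedFDeriv ℝ l (G i) x‖ :=
    .of_nonneg_of_le (fun _ => norm_nonneg _) (fun i => norm_le l i x le_top) (hG 0 l)
  rw [iteratedFDeriv_tsum_apply (fun i => (G i).smooth ⊤) (fun l _ => hG 0 l) norm_le le_top]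
  calc ‖x‖ ^ k * ‖∑' i, iteratedFDeriv ℝ l (G i) x‖
      ≤ ‖x‖ ^ k * ∑' i, ‖iteratedFDeriv ℝ l (G i) x‖ := by
        gcongr
        exact norm_tsum_le_tsum_norm summable_norm
    _ = ∑' i, ‖x‖ ^ k * ‖iteratedFDeriv ℝ l (G i) x‖ := tsum_mul_left.symm
    _ ≤ ∑' i, SchwartzMap.seminorm ℝ k l (G i) :=
        (summable_norm.mul_left _).tsum_le_tsum (fun i => (G i).le_seminorm ℝ k l x) (hG k l)

/-- The pointwise sum of a family of Schwartz functions all of whose Schwartz seminorms are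
summable. It is the sum of the family in the Schwartz space, see `hasSum_schwartzTsum`. -/
noncomputable def schwartzTsum (G : ι → 𝓢(E, F))
    (hG : ∀ k l, Summable fun i => SchwartzMap.seminorm ℝ k l (G i)) : 𝓢(E, F) where
  toFun x := ∑' i, G i x
  smooth' := contDiff_tsum (fun i => (G i).smooth ⊤) (fun l _ => hG 0 l)
    fun l i x _ => (G i).norm_iteratedFDeriv_le_seminorm ℝ l x
  decay' k l := ⟨_, norm_pow_mul_iteratedFDeriv_tsum_le hG k l⟩

theorem schwartzTsum_apply {G : ι → 𝓢(E, F)}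
    (hG : ∀ k l, Summable fun i => SchwartzMap.seminorm ℝ k l (G i)) (x : E) :
    schwartzTsum G hG x = ∑' i, G i x :=
  rfl

theorem seminorm_schwartzTsum_le {G : ι → 𝓢(E, F)}
    (hG : ∀ k l, Summable fun i => SchwartzMap.seminorm ℝ k l (G i)) (k l : ℕ) :
    SchwartzMap.seminorm ℝ k l (schwartzTsum G hG) ≤
      ∑' i, SchwartzMap.seminorm ℝ k l (G i) :=
  SchwartzMap.seminorm_le_bound ℝ k l _ (tsum_nonneg fun _ => apply_nonneg _ _)
    (norm_pow_mul_iteratedFDeriv_tsum_le hG k l)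

theorem sum_add_schwartzTsum_compl {G : ι → 𝓢(E, F)}
    (hG : ∀ k l, Summable fun i => SchwartzMap.seminorm ℝ k l (G i)) (s : Finset ι) :
    ∑ i ∈ s, G i +
      schwartzTsum (fun i : {i // i ∉ s} => G i) (fun k l => (hG k l).subtype _) =
        schwartzTsum G hG := by
  ext x
  have summable_apply : Summable fun i => G i x :=
    .of_norm_bounded (hG 0 0) fun i => (G i).norm_le_seminorm ℝ x
  simp only [add_apply, sum_apply, schwartzTsum_apply]
  exact summable_apply.sum_add_tsum_compl

theorem hasSum_schwartzTsum {G : ι → 𝓢(E, F)}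
    (hG : ∀ k l, Summable fun i => SchwartzMap.seminorm ℝ k l (G i)) :
    HasSum G (schwartzTsum G hG) := by
  refine ((schwartz_withSeminorms ℝ E F).tendsto_nhds _ _).2 fun ⟨k, l⟩ ε hε => ?_
  have tail_lt : ∀ᶠ s : Finset ι in atTop,
      ∑' i : {i // i ∉ s}, SchwartzMap.seminorm ℝ k l (G i) < ε :=
    (tendsto_tsum_compl_atTop_zero fun i => SchwartzMap.seminorm ℝ k l (G i)).eventually_lt_const hε
  filter_upwards [tail_lt] with s hs
  rw [← sum_add_schwartzTsum_compl hG s, sub_add_cancel_left, map_neg_eq_map]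
  exact (seminorm_schwartzTsum_le _ k l).trans_lt hs

theorem tsupport_schwartzTsum_subset {G : ι → 𝓢(E, F)}
    (hG : ∀ k l, Summable fun i => SchwartzMap.seminorm ℝ k l (G i)) {K : Set E}
    (hK : IsClosed K) (h : ∀ i, tsupport (G i) ⊆ K) : tsupport (schwartzTsum G hG) ⊆ K := by
  simp only [tsupport_subset_iff_forall_notMem hK] at h ⊢
  intro x hx
  simp only [schwartzTsum_apply, h _ x hx, tsum_zero]

end Series

section Bump

variable {E F : Type*} [NormedAddCommGroup E] [NormedSpace ℝ E] [FiniteDimensional ℝ E]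
  [MeasurableSpace E] [BorelSpace E] [NormedAddCommGroup F] [NormedSpace ℝ F] [CompleteSpace F]

theorem exists_schwartz_tsupport_subset_integral_eq (μ : Measure E) [IsLocallyFiniteMeasure μ]
    [μ.IsOpenPosMeasure] {U : Set E} {x : E} (hU : U ∈ 𝓝 x) (c : F) :
    ∃ f : 𝓢(E, F), tsupport f ⊆ U ∧ ∫ y, f y ∂μ = c := by
  obtain ⟨r, r_pos, hr⟩ := Metric.nhds_basis_closedBall.mem_iff.1 hU
  let φ : ContDiffBump x := ⟨r / 2, r, half_pos r_pos, half_lt_self r_pos⟩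
  have φ_compact : HasCompactSupport fun y => φ.normed μ y • c :=
    φ.hasCompactSupport_normed.smul_right
  have φ_smooth : ContDiff ℝ ∞ fun y => φ.normed μ y • c := φ.contDiff_normed.smul contDiff_const
  refine ⟨φ_compact.toSchwartzMap φ_smooth, ?_, φ.integral_normed_smul μ c⟩
  exact (tsupport_smul_subset_left _ _).trans (φ.tsupport_normed_eq.trans_subset hr)

end Bump

section Moment

variable {F : Type*} [NormedAddCommGroup F] [NormedSpace ℝ F]

/-- The `k`-th moment `∫ x, x ^ k • f x` of a Schwartz function `f` on the real line, as a
continuous linear map in `f`. -/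
noncomputable def schwartzMoment (k : ℕ) : 𝓢(ℝ, F) →L[ℝ] F :=
  SchwartzMap.integralCLM ℝ volume ∘L SchwartzMap.smulLeftCLM F fun x : ℝ => x ^ k

theorem integrable_pow_smul_schwartz (f : 𝓢(ℝ, F)) (k : ℕ) :
    Integrable fun x => x ^ k • f x := by
  rw [← SchwartzMap.smulLeftCLM_apply (by fun_prop)]
  exact SchwartzMap.integrable _

theorem schwartzMoment_apply (k : ℕ) (f : 𝓢(ℝ, F)) :
    schwartzMoment k f = ∫ x, x ^ k • f x := by
  rw [schwartzMoment, ContinuousLinearMap.comp_apply, SchwartzMap.integralCLM_apply,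
    SchwartzMap.smulLeftCLM_apply (by fun_prop)]

theorem schwartzMoment_derivCLM (k : ℕ) (f : 𝓢(ℝ, F)) :
    schwartzMoment k (SchwartzMap.derivCLM ℝ F f) = -((k : ℝ) • schwartzMoment (k - 1) f) := by
  have integrable_deriv_smul : Integrable fun x : ℝ => ((k : ℝ) * x ^ (k - 1)) • f x := by
    simpa only [mul_smul] using (integrable_pow_smul_schwartz f (k - 1)).fun_smul (k : ℝ)
  have by_parts := integral_bilinear_hasDerivAt_right_eq_neg_left_of_integrable
    (L := ContinuousLinearMap.lsmul ℝ ℝ) (fun x _ => hasDerivAt_pow k x)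
    (fun x _ => f.hasDerivAt x) (integrable_pow_smul_schwartz (SchwartzMap.derivCLM ℝ F f) k)
    integrable_deriv_smul (integrable_pow_smul_schwartz f k)
  simp only [ContinuousLinearMap.lsmul_apply, mul_smul] at by_parts
  simpa only [schwartzMoment_apply, SchwartzMap.derivCLM_apply, ← integral_smul] using by_parts

theorem exists_tsupport_subset_schwartzMoment_eq [CompleteSpace F] {U : Set ℝ} {x : ℝ}
    (hU : U ∈ 𝓝 x) (n : ℕ) (c : F) :
    ∃ f : 𝓢(ℝ, F), tsupport f ⊆ U ∧ (∀ k < n, schwartzMoment k f = 0) ∧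
      schwartzMoment n f = c := by
  induction n generalizing c with
  | zero =>
    obtain ⟨f, f_supp, f_int⟩ := exists_schwartz_tsupport_subset_integral_eq volume hU c
    exact ⟨f, f_supp, by simp, by simpa [schwartzMoment_apply] using f_int⟩
  | succ n ih =>
    obtain ⟨f, f_supp, f_lt, f_eq⟩ := ih (-((n + 1 : ℕ) : ℝ)⁻¹ • c)
    refine ⟨SchwartzMap.derivCLM ℝ F f,
      (SchwartzMap.tsupport_derivCLM_subset ℝ f).trans f_supp, fun k hk => ?_, ?_⟩
    · rw [schwartzMoment_derivCLM]
      rcases k with _ | k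
      · simp
      · rw [Nat.add_sub_cancel, f_lt k (Nat.succ_lt_succ_iff.1 hk), smul_zero, neg_zero]
    · have cast_ne_zero : ((n + 1 : ℕ) : ℝ) ≠ 0 := Nat.cast_ne_zero.2 n.succ_ne_zero
      rw [schwartzMoment_derivCLM, Nat.add_sub_cancel, f_eq, neg_smul, smul_neg, neg_neg,
        smul_inv_smul₀ cast_ne_zero]

end Moment

section Dilation

variable {F : Type*} [NormedAddCommGroup F] [NormedSpace ℝ F]

/-- The dilation `x ↦ f (t * x)` of a Schwartz function `f` on the real line, where `t ≠ 0` is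
encoded as a unit of `ℝ`. -/
noncomputable def schwartzDilation (t : ℝˣ) : 𝓢(ℝ, F) →L[ℝ] 𝓢(ℝ, F) :=
  SchwartzMap.compCLMOfContinuousLinearEquiv ℝ (ContinuousLinearEquiv.unitsEquivAut ℝ t)

theorem schwartzDilation_apply (t : ℝˣ) (f : 𝓢(ℝ, F)) (x : ℝ) :
    schwartzDilation t f x = f (t * x) := by
  simp [schwartzDilation, mul_comm]

theorem tsupport_schwartzDilation (t : ℝˣ) (f : 𝓢(ℝ, F)) :
    tsupport (schwartzDilation t f) = (fun x : ℝ => t * x) ⁻¹' tsupport f := by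
  have dilation_eq : ⇑(schwartzDilation t f) = f ∘ Homeomorph.mulLeft₀ (t : ℝ) t.ne_zero :=
    funext (schwartzDilation_apply t f)
  rw [dilation_eq, tsupport_comp_eq_preimage, Homeomorph.coe_mulLeft₀]

theorem schwartzMoment_schwartzDilation (k : ℕ) (t : ℝˣ) (f : 𝓢(ℝ, F)) :
    schwartzMoment k (schwartzDilation t f) =
      (|(t : ℝ)|⁻¹ * ((t : ℝ) ^ k)⁻¹) • schwartzMoment k f := by
  have pow_smul_eq : ∀ x : ℝ, x ^ k • f (t * x) =
      ((t : ℝ) ^ k)⁻¹ • ((t * x) ^ k • f (t * x)) := fun x => by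
    rw [mul_pow, mul_smul, inv_smul_smul₀ (pow_ne_zero k t.ne_zero)]
  simp only [schwartzMoment_apply, schwartzDilation_apply, pow_smul_eq]
  rw [integral_smul, Measure.integral_comp_mul_left (fun y => y ^ k • f y), abs_inv, smul_smul,
    mul_comm]

theorem seminorm_schwartzDilation_le (k l : ℕ) (t : ℝˣ) (f : 𝓢(ℝ, F)) :
    SchwartzMap.seminorm ℝ k l (schwartzDilation t f) ≤
      |(t : ℝ)| ^ l / |(t : ℝ)| ^ k * SchwartzMap.seminorm ℝ k l f := by
  have abs_t_pos : 0 < |(t : ℝ)| := abs_pos.2 t.ne_zero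
  refine SchwartzMap.seminorm_le_bound' ℝ k l _ (by positivity) fun x => ?_
  have dilation_eq : ⇑(schwartzDilation t f) = fun y => f (t * y) :=
    funext (schwartzDilation_apply t f)
  rw [dilation_eq, iteratedDeriv_comp_const_smul (f.smooth l), norm_smul, norm_pow,
    Real.norm_eq_abs]
  calc |x| ^ k * (|(t : ℝ)| ^ l * ‖iteratedDeriv l f (t * x)‖)
      = |(t : ℝ)| ^ l / |(t : ℝ)| ^ k * (|t * x| ^ k * ‖iteratedDeriv l f (t * x)‖) := by
        rw [abs_mul, mul_pow]
        field_simp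
    _ ≤ |(t : ℝ)| ^ l / |(t : ℝ)| ^ k * SchwartzMap.seminorm ℝ k l f := by
        gcongr
        exact f.le_seminorm' ℝ k l _

theorem seminorm_pow_smul_schwartzDilation_le {k n : ℕ} (hk : k ≤ n) (l : ℕ) {t : ℝˣ}
    (ht : |(t : ℝ)| ≤ 1) (f : 𝓢(ℝ, F)) :
    SchwartzMap.seminorm ℝ k l ((t : ℝ) ^ (n + 1) • schwartzDilation t f) ≤
      |(t : ℝ)| * SchwartzMap.seminorm ℝ k l f := by
  have abs_t_pos : 0 < |(t : ℝ)| := abs_pos.2 t.ne_zero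
  obtain ⟨m, rfl⟩ := Nat.exists_eq_add_of_le hk
  rw [map_smul_eq_mul, norm_pow, Real.norm_eq_abs]
  calc |(t : ℝ)| ^ (k + m + 1) * SchwartzMap.seminorm ℝ k l (schwartzDilation t f)
      ≤ |(t : ℝ)| ^ (k + m + 1) *
          (|(t : ℝ)| ^ l / |(t : ℝ)| ^ k * SchwartzMap.seminorm ℝ k l f) := by
        gcongr
        exact seminorm_schwartzDilation_le k l t f
    _ = |(t : ℝ)| ^ (m + l) * (|(t : ℝ)| * SchwartzMap.seminorm ℝ k l f) := by
        field_simp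
        ring
    _ ≤ |(t : ℝ)| * SchwartzMap.seminorm ℝ k l f :=
        mul_le_of_le_one_left (by positivity) (pow_le_one₀ abs_t_pos.le ht)

end Dilation

section Prescribed

variable {F : Type*} [NormedAddCommGroup F] [NormedSpace ℝ F] [CompleteSpace F]

theorem exists_seminorm_le_schwartzMoment_eq (n : ℕ) (c : F) {ε : ℝ} (hε : 0 < ε) :
    ∃ f : 𝓢(ℝ, F), (tsupport f ⊆ Set.Ici 0 ∧
      ∀ k ≤ n, ∀ l ≤ n, SchwartzMap.seminorm ℝ k l f ≤ ε) ∧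
      (∀ k < n, schwartzMoment k f = 0) ∧ schwartzMoment n f = c := by
  obtain ⟨g, g_supp, g_lt, g_eq⟩ :=
    exists_tsupport_subset_schwartzMoment_eq (Ici_mem_nhds (zero_lt_one' ℝ)) n c
  let M := (Finset.Iic (n, n)).sup (schwartzSeminormFamily ℝ ℝ F) g
  have le_M : ∀ k ≤ n, ∀ l ≤ n, SchwartzMap.seminorm ℝ k l g ≤ M := fun k hk l hl =>
    Seminorm.le_finset_sup_apply (p := schwartzSeminormFamily ℝ ℝ F) (i := (k, l))
      (Finset.mem_Iic.2 ⟨hk, hl⟩)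
  obtain ⟨t, t_pos, t_le, ht⟩ : ∃ t : ℝ, 0 < t ∧ t ≤ 1 ∧ t * M ≤ ε := by
    obtain ⟨r, r_pos, hr⟩ := exists_pos_mul_lt hε M
    refine ⟨min r 1, lt_min r_pos one_pos, min_le_right r 1, ?_⟩
    calc min r 1 * M ≤ r * M := mul_le_mul_of_nonneg_right (min_le_left r 1) (apply_nonneg _ g)
      _ ≤ ε := (mul_comm r M).trans_le hr.le
  lift t to ℝˣ using t_pos.ne'.isUnit
  refine ⟨(t : ℝ) ^ (n + 1) • schwartzDilation t g, ⟨?_, fun k hk l hl => ?_⟩,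
    fun k hk => ?_, ?_⟩
  · refine (tsupport_smul_subset_right _ _).trans ?_
    rw [tsupport_schwartzDilation]
    exact fun x hx => nonneg_of_mul_nonneg_right (g_supp hx) t_pos
  · calc SchwartzMap.seminorm ℝ k l ((t : ℝ) ^ (n + 1) • schwartzDilation t g)
        ≤ |(t : ℝ)| * SchwartzMap.seminorm ℝ k l g :=
          seminorm_pow_smul_schwartzDilation_le hk l (by rwa [abs_of_pos t_pos]) g
      _ ≤ t * M := by
          rw [abs_of_pos t_pos]
          exact mul_le_mul_of_nonneg_left (le_M k hk l hl) t_pos.le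
      _ ≤ ε := ht
  · rw [map_smul, schwartzMoment_schwartzDilation, g_lt k hk, smul_zero, smul_zero]
  · rw [map_smul, schwartzMoment_schwartzDilation, g_eq, abs_of_pos t_pos, ← mul_inv, ← pow_succ',
      smul_inv_smul₀ (pow_ne_zero _ t.ne_zero)]

theorem stmt9_general (s : ℕ → F) :
    ∃ f : 𝓢(ℝ, F), tsupport f ⊆ Set.Ici 0 ∧ ∀ n, s n = ∫ x, x ^ n • f x := by
  obtain ⟨G, G_mem, G_moment⟩ := exists_seq_forall_hasSum_map
    (fun k => (schwartzMoment k : 𝓢(ℝ, F) →L[ℝ] F).toLinearMap.toAddMonoidHom)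
    (fun n => {f | tsupport f ⊆ Set.Ici 0 ∧
      ∀ k ≤ n, ∀ l ≤ n, SchwartzMap.seminorm ℝ k l f ≤ (1 / 2) ^ n})
    (fun n c => exists_seminorm_le_schwartzMoment_eq n c (by positivity)) s
  have G_summable : ∀ k l, Summable fun n => SchwartzMap.seminorm ℝ k l (G n) := fun k l =>
    summable_geometric_two.of_norm_bounded_eventually_nat <| by
      filter_upwards [eventually_ge_atTop k, eventually_ge_atTop l] with n hk hl
      rw [Real.norm_of_nonneg (apply_nonneg _ _)]
      exact (G_mem n).2 k hk l hl
  refine ⟨schwartzTsum G G_summable,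
    tsupport_schwartzTsum_subset G_summable isClosed_Ici fun n => (G_mem n).1, fun n => ?_⟩
  rw [← schwartzMoment_apply]
  exact (G_moment n).unique ((schwartzMoment n).hasSum (hasSum_schwartzTsum G_summable))

end Prescribed

/-- (Duran) Every complex sequence is the moment sequence of a Schwartz function
supported in `[0,∞)`. -/
theorem stmt9 (s : ℕ → ℂ) :
    ∃ f : SchwartzMap ℝ ℂ, tsupport ⇑f ⊆ Set.Ici 0 ∧
      ∀ n : ℕ, s n = ∫ x, ((x : ℝ) : ℂ) ^ n * f x := by
  simpa only [Complex.real_smul, Complex.ofReal_pow] using stmt9_general s
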